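/- arXiv:2008.05558 — 2 statements merged into one kernel-verified Lean document; each statement's English description precedes it below -/
import Mathlib

section
/- Let G be a graph on n vertices with adjacency matrix A and stability number α(G), and let k be a real scalar with α(G) < k. Then the quartic form p_{A,k}(x) := (x²)^T (kA + kI - J) (x²), where x² denotes the entrywise square of x, is positive definite, i.e., p_{A,k}(x) > 0 for all x ∈ ℝ^n with x ≠ 0. -/
open Matrix
open scoped RealInnerProductSpace

/-- The stability (independence) number of a graph: the size of the largest set of
pairwise non-adjacent vertices. -/
noncomputable def stabilityNumber {V : Type*} (G : SimpleGraph V) : ℕ :=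
  sSup {k | ∃ s : Finset V, s.card = k ∧ ∀ i ∈ s, ∀ j ∈ s, i ≠ j → ¬ G.Adj i j}

/-- The matrix `M_{A,k} = k A + k I - J`, where `J` is the all-ones matrix. -/
noncomputable def MAk {n : ℕ} (A : Matrix (Fin n) (Fin n) ℝ) (k : ℝ) : Matrix (Fin n) (Fin n) ℝ :=
  k • A + k • (1 : Matrix (Fin n) (Fin n) ℝ) - Matrix.of (fun _ _ => (1 : ℝ))

/-- Entrywise square of a vector. -/
def vsq {n : ℕ} (x : Fin n → ℝ) : Fin n → ℝ := fun i => (x i) ^ 2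

/-- A symmetric matrix `M` is copositive if `xᵀ M x ≥ 0` for all entrywise nonnegative `x`. -/
def Copositive {n : ℕ} (M : Matrix (Fin n) (Fin n) ℝ) : Prop :=
  ∀ x : Fin n → ℝ, (∀ i, 0 ≤ x i) → 0 ≤ x ⬝ᵥ M.mulVec x

/-- The quartic form `p_M(x) = (x²)ᵀ M (x²)`. -/
noncomputable def quarticForm {n : ℕ} (M : Matrix (Fin n) (Fin n) ℝ) :
    EuclideanSpace ℝ (Fin n) → ℝ :=
  fun x => vsq x ⬝ᵥ M.mulVec (vsq x)

/-- The quadratic form `q_M(x) = xᵀ M x`. -/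
noncomputable def quadForm {n : ℕ} (M : Matrix (Fin n) (Fin n) ℝ) :
    EuclideanSpace ℝ (Fin n) → ℝ :=
  fun x => x ⬝ᵥ M.mulVec x

/-- `xm` is a local minimizer of `f` over `Ω`: `xm ∈ Ω` and there is `ε > 0` such that
`f xm ≤ f x` for all `x ∈ Ω` with `‖x - xm‖ ≤ ε` (Euclidean norm). -/
def IsLocalMinimizer {n : ℕ} (f : EuclideanSpace ℝ (Fin n) → ℝ)
    (Ω : Set (EuclideanSpace ℝ (Fin n))) (xm : EuclideanSpace ℝ (Fin n)) : Prop :=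
  xm ∈ Ω ∧ ∃ ε > 0, ∀ x ∈ Ω, ‖x - xm‖ ≤ ε → f xm ≤ f x

/-- `xm` is a strict local minimizer of `f` over `Ω`: `xm ∈ Ω` and there is `ε > 0` such that
`f xm < f x` for all `x ∈ Ω` with `x ≠ xm` and `‖x - xm‖ ≤ ε` (Euclidean norm). -/
def IsStrictLocalMinimizer {n : ℕ} (f : EuclideanSpace ℝ (Fin n) → ℝ)
    (Ω : Set (EuclideanSpace ℝ (Fin n))) (xm : EuclideanSpace ℝ (Fin n)) : Prop :=
  xm ∈ Ω ∧ ∃ ε > 0, ∀ x ∈ Ω, x ≠ xm → ‖x - xm‖ ≤ ε → f xm < f x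

lemma stab_card_le {n : ℕ} (G : SimpleGraph (Fin n)) (s : Finset (Fin n))
    (hs : ∀ i ∈ s, ∀ j ∈ s, i ≠ j → ¬ G.Adj i j) : s.card ≤ stabilityNumber G := by
  apply le_csSup
  · refine ⟨n, ?_⟩
    rintro _ ⟨t, rfl, -⟩
    simpa using t.card_le_univ
  · exact ⟨s, rfl, hs⟩

lemma sq_le_quad {n : ℕ} (G : SimpleGraph (Fin n)) [DecidableRel G.Adj] (y : Fin n → ℝ)
    (hy : ∀ i, 0 ≤ y i) : ∑ i, y i * y i ≤ y ⬝ᵥ ((G.adjMatrix ℝ + 1).mulVec y) := by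
  rw [Matrix.add_mulVec, Matrix.one_mulVec, dotProduct_add]
  have : 0 ≤ y ⬝ᵥ ((G.adjMatrix ℝ).mulVec y) := by
    refine Finset.sum_nonneg fun i _ => mul_nonneg (hy i) ?_
    rw [SimpleGraph.adjMatrix_mulVec_apply]
    exact Finset.sum_nonneg fun j _ => hy j
  have h2 : y ⬝ᵥ y = ∑ i, y i * y i := rfl
  linarith

lemma quad_shift {n : ℕ} (G : SimpleGraph (Fin n)) [DecidableRel G.Adj] (y : Fin n → ℝ)
    (i j : Fin n) (hij : G.Adj i j) (t : ℝ) :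
    (y + t • (Pi.single i 1 - Pi.single j 1)) ⬝ᵥ
      ((G.adjMatrix ℝ + 1).mulVec (y + t • (Pi.single i 1 - Pi.single j 1)))
    = y ⬝ᵥ ((G.adjMatrix ℝ + 1).mulVec y) + 2 * t * (((G.adjMatrix ℝ + 1).mulVec y) i
      - ((G.adjMatrix ℝ + 1).mulVec y) j) := by
  set B := G.adjMatrix ℝ + 1 with hB
  set w : Fin n → ℝ := Pi.single i 1 - Pi.single j 1 with hw
  have hsymm : Bᵀ = B := by simp [hB]
  have h1 : y ⬝ᵥ B.mulVec w = w ⬝ᵥ B.mulVec y := by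
    rw [Matrix.dotProduct_mulVec, ← Matrix.mulVec_transpose, hsymm, dotProduct_comm]
  have h2 : ∀ v : Fin n → ℝ, w ⬝ᵥ v = v i - v j := by
    intro v
    simp [hw, sub_dotProduct]
  have h3 : w ⬝ᵥ B.mulVec w = 0 := by
    rw [h2]
    have hne := hij.ne
    have hne' := hij.ne'
    simp [hw, hB, Matrix.mulVec_sub, Matrix.one_apply, hij, hij.symm, hne, hne']
  rw [Matrix.mulVec_add, Matrix.mulVec_smul, dotProduct_add, add_dotProduct, add_dotProduct,
    smul_dotProduct, dotProduct_smul, smul_dotProduct, dotProduct_smul, h1, h3, h2]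
  simp only [smul_eq_mul]
  ring

lemma motzkin_straus {n : ℕ} (G : SimpleGraph (Fin n)) [DecidableRel G.Adj] (m : ℕ) :
    ∀ y : Fin n → ℝ, (∀ i, 0 ≤ y i) → (Finset.univ.filter (fun i => y i ≠ 0)).card = m →
    (∑ i, y i) ^ 2 ≤ stabilityNumber G * (y ⬝ᵥ ((G.adjMatrix ℝ + 1).mulVec y)) := by
  induction m using Nat.strong_induction_on with
  | _ m ih =>
  intro y hy hm
  by_cases hs : ∀ i ∈ Finset.univ.filter (fun i => y i ≠ 0),
      ∀ j ∈ Finset.univ.filter (fun i => y i ≠ 0), i ≠ j → ¬ G.Adj i j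
  · have hc := stab_card_le G _ hs
    have h1 := sq_sum_le_card_mul_sum_sq (s := Finset.univ.filter (fun i => y i ≠ 0)) (f := y)
    rw [Finset.sum_filter_ne_zero] at h1
    have h2 : ∑ i ∈ Finset.univ.filter (fun i => y i ≠ 0), y i ^ 2 ≤ ∑ i, y i * y i := by
      simp_rw [← sq]
      exact Finset.sum_le_sum_of_subset_of_nonneg (Finset.subset_univ _)
        (fun _ _ _ => sq_nonneg _)
    refine h1.trans ?_
    refine mul_le_mul (by exact_mod_cast hc) (h2.trans (sq_le_quad G y hy))
      (Finset.sum_nonneg fun _ _ => sq_nonneg _) (by positivity)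
  · push Not at hs
    obtain ⟨i, hi, j, hj, -, hadj⟩ := hs
    obtain ⟨i, j, hi, hj, hadj, hle⟩ : ∃ i j, y i ≠ 0 ∧ y j ≠ 0 ∧ G.Adj i j ∧
        ((G.adjMatrix ℝ + 1).mulVec y) i ≤ ((G.adjMatrix ℝ + 1).mulVec y) j := by
      rcases le_total (((G.adjMatrix ℝ + 1).mulVec y) i) (((G.adjMatrix ℝ + 1).mulVec y) j)
        with h | h
      · exact ⟨i, j, by simpa using hi, by simpa using hj, hadj, h⟩
      · exact ⟨j, i, by simpa using hj, by simpa using hi, hadj.symm, h⟩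
    have hne := hadj.ne
    have hq := quad_shift G y i j hadj (y j)
    set z := y + y j • (Pi.single i 1 - Pi.single j 1 : Fin n → ℝ) with hz
    have hzi : z i = y i + y j := by simp [hz, hne]
    have hzj : z j = 0 := by simp [hz, hne.symm]
    have hzo : ∀ l, l ≠ i → l ≠ j → z l = y l := by
      intro l h1 h2
      simp [hz, h1, h2]
    have hsum : ∑ l, z l = ∑ l, y l := by
      simp [hz, Finset.sum_add_distrib, ← Finset.mul_sum]
    have hz0 : ∀ l, 0 ≤ z l := by
      intro l
      by_cases h2 : l = j
      · rw [h2, hzj]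
      by_cases h1 : l = i
      · rw [h1, hzi]; exact add_nonneg (hy i) (hy j)
      · rw [hzo l h1 h2]; exact hy l
    have hlt : (Finset.univ.filter (fun l => z l ≠ 0)).card < m := by
      rw [← hm]
      apply Finset.card_lt_card
      refine (Finset.ssubset_iff_of_subset ?_).2 ⟨j, by simpa using hj, by simp [hzj]⟩
      intro l hl
      simp only [Finset.mem_filter, Finset.mem_univ, true_and] at hl ⊢
      by_cases h2 : l = j
      · rwa [h2]
      by_cases h1 : l = i
      · rwa [h1]
      · rwa [← hzo l h1 h2]
    have := ih _ hlt z hz0 rfl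
    rw [hsum, hq] at this
    refine this.trans (mul_le_mul_of_nonneg_left ?_ (by positivity))
    nlinarith [mul_nonneg (hy j) (sub_nonneg.2 hle)]

/-- If `α(G) < k`, then the quartic form `p_{A,k}(x) = (x²)ᵀ (kA + kI - J) (x²)` is
positive definite. -/
theorem pAk_positive_definite {n : ℕ} (G : SimpleGraph (Fin n)) [DecidableRel G.Adj]
    (k : ℝ) (hk : (stabilityNumber G : ℝ) < k) :
    ∀ x : Fin n → ℝ, x ≠ 0 → 0 < vsq x ⬝ᵥ (MAk (G.adjMatrix ℝ) k).mulVec (vsq x) := by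
  intro x hx
  have hy : ∀ i, 0 ≤ vsq x i := fun i => sq_nonneg _
  have hms := motzkin_straus G _ (vsq x) hy rfl
  have hq := sq_le_quad G (vsq x) hy
  have hpos : 0 < ∑ i, vsq x i * vsq x i := by
    obtain ⟨i, hi⟩ := Function.ne_iff.1 hx
    refine Finset.sum_pos' (fun i _ => mul_self_nonneg _) ⟨i, Finset.mem_univ _, ?_⟩
    have : 0 < vsq x i := sq_pos_of_ne_zero hi
    positivity
  have hform : vsq x ⬝ᵥ (MAk (G.adjMatrix ℝ) k).mulVec (vsq x)
      = k * (vsq x ⬝ᵥ ((G.adjMatrix ℝ + 1).mulVec (vsq x))) - (∑ i, vsq x i) ^ 2 := by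
    have hJ : (Matrix.of (fun _ _ => (1 : ℝ)) : Matrix (Fin n) (Fin n) ℝ).mulVec (vsq x)
        = fun _ => ∑ i, vsq x i := by
      ext i
      simp [Matrix.mulVec, dotProduct]
    rw [MAk, ← smul_add, Matrix.sub_mulVec, Matrix.smul_mulVec, dotProduct_sub,
      dotProduct_smul, hJ, smul_eq_mul]
    congr 1
    rw [dotProduct, ← Finset.sum_mul, sq]
  rw [hform]
  nlinarith [mul_pos (sub_pos.2 hk) (hpos.trans_le hq)]
end

section
/- Let M ∈ ℝ^{n×n} be symmetric and define p(x) := (x²)^T M (x²). If x̄ ∈ ℝ^n is a second-order point of p, then the principal submatrix of M whose rows and columns correspond to the indices of the nonzero entries of x̄ is positive semidefinite, and the vector M x̄² has zero entries at all indices where x̄ is nonzero. -/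
open Matrix
open scoped RealInnerProductSpace

attribute [local instance] Classical.propDecidable

lemma aux_vsq_deriv (a b : ℝ) : HasDerivAt (fun t : ℝ => (a + t * b) ^ 2) (2 * a * b) 0 := by
  have h := (((hasDerivAt_id (0 : ℝ)).mul_const b).const_add a).pow 2
  refine h.congr_deriv ?_
  simp

lemma aux_mulVec_deriv {n : ℕ} (M : Matrix (Fin n) (Fin n) ℝ) (x v : EuclideanSpace ℝ (Fin n))
    (i : Fin n) :
    HasDerivAt (fun t : ℝ => ∑ j, M i j * (x j + t * v j) ^ 2)
      (∑ j, M i j * (2 * x j * v j)) 0 :=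
  HasDerivAt.fun_sum fun j _ => (aux_vsq_deriv (x j) (v j)).const_mul (M i j)

lemma aux_gradient {n : ℕ} (M : Matrix (Fin n) (Fin n) ℝ) (hM : M.IsSymm)
    (x : EuclideanSpace ℝ (Fin n)) (i : Fin n) :
    gradient (quarticForm M) x i = 4 * x i * ∑ j, M i j * x j ^ 2 := by
  have hq : quarticForm M = fun x => ∑ i, x i ^ 2 * ∑ j, M i j * x j ^ 2 := by
    ext x
    simp [quarticForm, vsq, dotProduct, mulVec]
  have hd : DifferentiableAt ℝ (quarticForm M) x := by
    rw [hq]; fun_prop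
  set v : EuclideanSpace ℝ (Fin n) := EuclideanSpace.single i 1 with hv
  have h1 : HasLineDerivAt ℝ (quarticForm M) (fderiv ℝ (quarticForm M) x v) x v :=
    hd.hasFDerivAt.hasLineDerivAt v
  have h2 : HasLineDerivAt ℝ (quarticForm M)
      (∑ k, (2 * x k * v k * ∑ j, M k j * x j ^ 2 +
        x k ^ 2 * ∑ j, M k j * (2 * x j * v j))) x v := by
    rw [hq]
    have := HasDerivAt.fun_sum (u := Finset.univ) fun k (_ : k ∈ Finset.univ) =>
      (aux_vsq_deriv (x k) (v k)).mul (aux_mulVec_deriv M x v k)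
    simpa [HasLineDerivAt] using this
  have h3 : gradient (quarticForm M) x i = fderiv ℝ (quarticForm M) x v := by
    have : fderiv ℝ (quarticForm M) x v = ⟪gradient (quarticForm M) x, v⟫ := by
      simp [gradient]
    rw [this, hv]
    rw [EuclideanSpace.inner_single_right]; simp only [conj_trivial, one_mul]
  rw [h3, h1.unique h2, Finset.sum_add_distrib]
  have e1 : ∑ k, 2 * x k * v k * ∑ j, M k j * x j ^ 2 = 2 * x i * ∑ j, M i j * x j ^ 2 := by
    rw [Finset.sum_eq_single i] <;> simp +contextual [hv]
  have e2 : ∑ k, x k ^ 2 * ∑ j, M k j * (2 * x j * v j) = 2 * x i * ∑ j, M i j * x j ^ 2 := by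
    rw [Finset.mul_sum]
    refine Finset.sum_congr rfl fun k _ => ?_
    rw [Finset.sum_eq_single i]
    · rw [← hM.apply i k]; simp [hv]; ring
    · intro b _ hb; simp [hv, hb]
    · simp
  rw [e1, e2]; ring

lemma aux_hessian {n : ℕ} (M : Matrix (Fin n) (Fin n) ℝ) (hM : M.IsSymm)
    (x v : EuclideanSpace ℝ (Fin n)) (i : Fin n) :
    fderiv ℝ (gradient (quarticForm M)) x v i =
      4 * v i * (∑ j, M i j * x j ^ 2) + 4 * x i * ∑ j, M i j * (2 * x j * v j) := by
  have hd : DifferentiableAt ℝ (gradient (quarticForm M)) x := by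
    rw [differentiableAt_euclidean]
    intro i
    simp only [aux_gradient M hM]
    fun_prop
  have h1 : HasLineDerivAt ℝ (gradient (quarticForm M)) (fderiv ℝ (gradient (quarticForm M)) x v)
      x v := hd.hasFDerivAt.hasLineDerivAt v
  have hproj : HasDerivAt (fun t : ℝ => gradient (quarticForm M) (x + t • v) i)
      (fderiv ℝ (gradient (quarticForm M)) x v i) 0 :=
    (EuclideanSpace.proj (𝕜 := ℝ) i).hasFDerivAt.comp_hasDerivAt (0 : ℝ) h1
  have h2 : HasDerivAt (fun t : ℝ => gradient (quarticForm M) (x + t • v) i)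
      (4 * v i * (∑ j, M i j * x j ^ 2) + 4 * x i * ∑ j, M i j * (2 * x j * v j)) 0 := by
    have := ((((hasDerivAt_id (0 : ℝ)).mul_const (v i)).const_add (x i)).const_mul 4).fun_mul
      (aux_mulVec_deriv M x v i)
    simp only [aux_gradient M hM]
    simpa using this
  exact hproj.unique h2

/-- If `xm` is a second-order point of `p(x) = (x²)ᵀ M (x²)` with `M` symmetric, then the
principal submatrix of `M` indexed by the nonzero entries of `xm` is positive semidefinite,
and `M xm²` vanishes at all indices where `xm` is nonzero. -/
theorem second_order_point_submatrix_posSemidef {n : ℕ} (M : Matrix (Fin n) (Fin n) ℝ)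
    (hM : M.IsSymm) (xm : EuclideanSpace ℝ (Fin n))
    (hgrad : gradient (quarticForm M) xm = 0)
    (hhess : ∀ v : EuclideanSpace ℝ (Fin n),
        0 ≤ ⟪fderiv ℝ (gradient (quarticForm M)) xm v, v⟫) :
    (M.submatrix (fun i : {i : Fin n // xm i ≠ 0} => (i : Fin n))
        (fun i : {i : Fin n // xm i ≠ 0} => (i : Fin n))).PosSemidef ∧
    (∀ i : Fin n, xm i ≠ 0 → M.mulVec (vsq xm) i = 0) := by
  have h2 : ∀ i : Fin n, xm i ≠ 0 → ∑ j, M i j * xm j ^ 2 = 0 := by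
    intro i hi
    have h := aux_gradient M hM xm i
    rw [hgrad] at h
    simpa [hi] using h
  refine ⟨?_, fun i hi => by simpa [mulVec, dotProduct, vsq] using h2 i hi⟩
  refine .of_dotProduct_mulVec_nonneg ?_ fun y => ?_
  · ext i j
    simpa using hM.apply _ _
  · set z : Fin n → ℝ := fun i => if h : xm i ≠ 0 then y ⟨i, h⟩ else 0 with hz
    have hz0 : ∀ i, xm i = 0 → z i = 0 := fun i hi => by simp [hz, hi]
    set v : EuclideanSpace ℝ (Fin n) := WithLp.toLp 2 fun i => z i / xm i with hv
    have hxv : ∀ i, xm i * v i = z i := by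
      intro i
      by_cases hi : xm i = 0
      · simp [hi, hz0 i hi]
      · simp [hv]; field_simp
    have h := hhess v
    have hsub : ∀ f : Fin n → ℝ, ∑ i, z i * f i = ∑ i : {i : Fin n // xm i ≠ 0}, y i * f i := by
      intro f
      have e : ∀ i : {i : Fin n // xm i ≠ 0}, y i * f i = z i * f i := fun i => by
        simp [hz, i.2]
      simp only [e]
      rw [← Finset.sum_subtype (Finset.univ.filter fun i => xm i ≠ 0) (by simp)
        (fun i => z i * f i), Finset.sum_filter_of_ne]
      intro i _ hne hi
      exact hne (by rw [hz0 i hi, zero_mul])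
    have key : ⟪fderiv ℝ (gradient (quarticForm M)) xm v, v⟫ =
        8 * ∑ i, z i * ∑ j, z j * M i j := by
      rw [PiLp.inner_apply, Finset.mul_sum]
      refine Finset.sum_congr rfl fun i _ => ?_
      rw [aux_hessian M hM]
      have e : ∑ j, M i j * (2 * xm j * v j) = 2 * ∑ j, z j * M i j := by
        rw [Finset.mul_sum]
        refine Finset.sum_congr rfl fun j _ => ?_
        rw [← hxv j]; ring
      rw [e]
      have e2 : v i * ∑ j, M i j * xm j ^ 2 = 0 := by
        by_cases hi : xm i = 0
        · simp [hv, hi]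
        · rw [h2 i hi, mul_zero]
      simp only [RCLike.inner_apply, conj_trivial]
      rw [← hxv i]
      linear_combination 4 * v i * e2
    rw [key] at h
    simp only [hsub] at h
    simp only [dotProduct, mulVec, submatrix_apply, star_trivial]
    simp only [mul_comm (M _ _)]
    linarith
end
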